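/- Let K be a field of characteristic zero and let I ⊂ S = K[x_1,…,x_n] be an artinian monomial ideal generated in a single degree d. Suppose there exist integers 1 ≤ i < j ≤ n such that for every monomial m of degree d in S, one has: x_i·x_j divides m if and only if m ∉ I. Then S/I has the strong Lefschetz property. -/

import Mathlib

open MvPolynomial

/-- The degree-`j` graded component of `S/I` (for `S = K[x_1,…,x_n]`), as a `K`-submodule of
the quotient: the image of the space of homogeneous polynomials of degree `j`.
For negative `j` it is the zero submodule. -/
noncomputable def gradedPiece {K : Type*} [Field K] {n : ℕ}
    (I : Ideal (MvPolynomial (Fin n) K)) (j : ℤ) :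
    Submodule K (MvPolynomial (Fin n) K ⧸ I) :=
  if 0 ≤ j then
    (homogeneousSubmodule (Fin n) K j.toNat).map (Ideal.Quotient.mkₐ K I).toLinearMap
  else ⊥

/-- A linear endomorphism `f` has maximal rank from `A` to `B` if it is injective on `A`
or maps `A` onto `B`. -/
def MaxRankOn {K M : Type*} [Field K] [AddCommGroup M] [Module K M]
    (f : M →ₗ[K] M) (A B : Submodule K M) : Prop :=
  (∀ x ∈ A, f x = 0 → x = 0) ∨ B ≤ A.map f

/-!
Under the hypotheses `I` is generated by the monomials of degree `d` that avoid `x_i` or `x_j`, so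
`x^s ∈ I` if and only if `d + s_i ≤ |s|` or `d + s_j ≤ |s|`. Splitting a monomial into its part
`x^r` away from `x_i, x_j` and its part in `x_i, x_j` decomposes `S/I` into copies of
`K[x_i, x_j] / (x_i ^ (d - |r|), x_j ^ (d - |r|))` shifted by `|r|`. All of these have a Hilbert
function symmetric about the same degree `d - 1`, and `ℓ = x_i + x_j` acts on each of them.

Hence it is enough that `ℓ ^ (2d - 2 - 2e)` is bijective from degree `e` to degree `2d - 2 - e`.
Injectivity: on one summand, after putting `x_i = 1` and `x_j = T`, an element of the kernel gives
a polynomial divisible by `(1 + T) ^ k` with at most `k` terms, and such a polynomial vanishes in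
characteristic zero. Surjectivity: the target is spanned by multiples of
`(x_i x_j) ^ (d - 1 - e)`, so its dimension is at most that of the source.
-/

section SparsePolynomial

variable {R : Type*} [CommRing R]

theorem coeff_X_mul_derivative_sub_C_mul (p : Polynomial R) (r : R) (b : ℕ) :
    (Polynomial.X * Polynomial.derivative p - Polynomial.C r * p).coeff b =
      (b - r) * p.coeff b := by
  rw [Polynomial.coeff_sub, Polynomial.coeff_C_mul]
  cases b with
  | zero => simp
  | succ b =>
    rw [Polynomial.coeff_X_mul, Polynomial.coeff_derivative]
    push_cast
    ring

variable [IsDomain R] [CharZero R]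

theorem support_X_mul_derivative_sub_C_natCast_mul (p : Polynomial R) (r : ℕ) :
    (Polynomial.X * Polynomial.derivative p - Polynomial.C (r : R) * p).support =
      p.support.erase r := by
  ext b
  rw [Polynomial.mem_support_iff, coeff_X_mul_derivative_sub_C_mul, mul_ne_zero_iff, sub_ne_zero,
    Nat.cast_injective.ne_iff, Finset.mem_erase, Polynomial.mem_support_iff]

-- The operator `X * d/dX - r` kills exactly the term of degree `r` and costs only one factor
-- `X - a`.
theorem eq_zero_of_X_sub_C_pow_dvd_of_card_support_le {a : R} (ha : a ≠ 0) {m : ℕ}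
    {p : Polynomial R} (hdvd : (Polynomial.X - Polynomial.C a) ^ m ∣ p)
    (hcard : p.support.card ≤ m) : p = 0 := by
  induction m generalizing p with
  | zero => simpa using hcard
  | succ m ih =>
    by_contra hp
    obtain ⟨r, hr⟩ := Polynomial.support_nonempty.2 hp
    set q := Polynomial.X * Polynomial.derivative p - Polynomial.C (r : R) * p
    have hq_support : q.support = p.support.erase r :=
      support_X_mul_derivative_sub_C_natCast_mul p r
    have hq_card : q.support.card + 1 = p.support.card := by
      rw [hq_support, Finset.card_erase_add_one hr]
    have hq_dvd : (Polynomial.X - Polynomial.C a) ^ m ∣ q :=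
      dvd_sub ((Polynomial.pow_sub_one_dvd_derivative_of_pow_dvd hdvd).mul_left _)
        (((pow_dvd_pow _ m.le_succ).trans hdvd).mul_left _)
    have hq : q = 0 := ih hq_dvd (by omega)
    obtain ⟨b, c, hc, rfl⟩ := Polynomial.card_support_eq_one.1 (by rw [← hq_card, hq]; rfl)
    have hroot : Polynomial.IsRoot (Polynomial.C c * Polynomial.X ^ b) a :=
      Polynomial.dvd_iff_isRoot.1 ((dvd_pow_self _ m.succ_ne_zero).trans hdvd)
    exact mul_ne_zero hc (pow_ne_zero b ha) (by simpa using hroot)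

end SparsePolynomial

section Exponents

variable {σ : Type*}

theorem degree_erase_add_apply (s : σ →₀ ℕ) (a : σ) : (s.erase a).degree + s a = s.degree := by
  conv_rhs => rw [← Finsupp.erase_add_single a s, map_add, Finsupp.degree_single]

theorem exists_le_degree_eq_and_apply_eq_zero_iff (s : σ →₀ ℕ) (a : σ) (d : ℕ) :
    (∃ g ≤ s, g.degree = d ∧ g a = 0) ↔ d + s a ≤ s.degree := by
  classical
  rw [← degree_erase_add_apply s a, add_le_add_iff_right]
  constructor
  · rintro ⟨g, hgs, rfl, hga⟩
    refine Finsupp.degree_mono fun b => ?_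
    rw [Finsupp.erase_apply]
    split_ifs with hb
    · exact (hb ▸ hga).le
    · exact hgs b
  · intro hd
    obtain ⟨g, hgs, hg⟩ := Finsupp.exists_le_degree_eq _ d hd
    have hle : s.erase a ≤ s := fun b => by
      rw [Finsupp.erase_apply]
      split_ifs <;> simp
    exact ⟨g, hgs.trans hle, hg, by simpa using hgs a⟩

/-- The exponent of the part of `x^s` not involving `x_i` and `x_j`; it indexes the summands of the
decomposition of a polynomial ring over `K[x_i, x_j]`. -/
noncomputable def offPart (i j : σ) (s : σ →₀ ℕ) : σ →₀ ℕ :=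
  (s.erase i).erase j

variable {i j : σ}

theorem degree_offPart_add (hij : i ≠ j) (s : σ →₀ ℕ) :
    (offPart i j s).degree + s i + s j = s.degree := by
  have hj : (s.erase i) j = s j := Finsupp.erase_ne hij.symm
  have hi := degree_erase_add_apply s i
  rw [← degree_erase_add_apply (s.erase i) j, hj] at hi
  rw [← hi, offPart, add_right_comm]

theorem single_add_single_le_iff (hij : i ≠ j) {s : σ →₀ ℕ} {b c : ℕ} :
    Finsupp.single i b + Finsupp.single j c ≤ s ↔ b ≤ s i ∧ c ≤ s j := by
  classical
  constructor
  · intro h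
    exact ⟨by simpa [hij.symm] using h i, by simpa [hij] using h j⟩
  · rintro ⟨hi, hj⟩ a
    simp only [Finsupp.add_apply, Finsupp.single_apply]
    grind

theorem eq_of_offPart_eq (hij : i ≠ j) {s t : σ →₀ ℕ} (hoff : offPart i j s = offPart i j t)
    (hj : s j = t j) (hdeg : s.degree = t.degree) : s = t := by
  classical
  have hi : s i = t i := by
    have hs := degree_offPart_add hij s
    have ht := degree_offPart_add hij t
    rw [hoff] at hs
    omega
  ext a
  have ha := DFunLike.congr_fun hoff a
  simp only [offPart, Finsupp.erase_apply] at ha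
  grind

theorem offPart_add (i j : σ) (s t : σ →₀ ℕ) :
    offPart i j (s + t) = offPart i j s + offPart i j t := by
  simp only [offPart, Finsupp.erase_add]

end Exponents

section Homogeneous

variable {σ R : Type*} [CommSemiring R]

theorem degree_eq_of_mem_support {p : MvPolynomial σ R} {e : ℕ} (hp : p.IsHomogeneous e)
    {s : σ →₀ ℕ} (hs : s ∈ p.support) : s.degree = e :=
  (hp.degree_eq_sum_deg_support hs).symm

variable (R) in
theorem isHomogeneous_X_add_X (i j : σ) : (X i + X j : MvPolynomial σ R).IsHomogeneous 1 :=
  (isHomogeneous_X R i).add (isHomogeneous_X R j)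

end Homogeneous

section Dehomogenize

variable {σ R : Type*} [DecidableEq σ] [CommSemiring R]

variable (R) in
/-- Dehomogenization with respect to the pair `x_i, x_j`: it sends `x_i` to `1`, `x_j` to the
variable `T` of `R[T]` and fixes the other variables. The coefficient at `r` is the component of a
polynomial in the summand indexed by `r`. -/
noncomputable def dehomogenize (i j : σ) :
    MvPolynomial σ R →ₐ[R] MvPolynomial σ (Polynomial R) :=
  aeval fun a => if a = i then 1 else if a = j then C Polynomial.X else X a

variable {i j : σ}

theorem dehomogenize_X_left (i j : σ) : dehomogenize R i j (X i) = 1 := by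
  simp [dehomogenize]

theorem dehomogenize_X_right (hij : i ≠ j) :
    dehomogenize R i j (X j) = C Polynomial.X := by
  simp [dehomogenize, hij.symm]

theorem dehomogenize_X_of_ne {a : σ} (hi : a ≠ i) (hj : a ≠ j) :
    dehomogenize R i j (X a) = X a := by
  simp [dehomogenize, hi, hj]

theorem dehomogenize_monomial (hij : i ≠ j) (s : σ →₀ ℕ) (c : R) :
    dehomogenize R i j (monomial s c) =
      monomial (offPart i j s) (Polynomial.monomial (s j) c) := by
  induction s using Finsupp.induction_linear generalizing c with
  | zero => simp [offPart, dehomogenize]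
  | add s t hs ht =>
    have hmul : monomial (s + t) c = monomial s c * monomial t 1 := by simp [monomial_mul]
    rw [hmul, map_mul, hs, ht, monomial_mul, offPart_add, Polynomial.monomial_mul_monomial,
      mul_one, Finsupp.add_apply]
  | single a m =>
    rw [← C_mul_X_pow_eq_monomial, map_mul, map_pow, ← algebraMap_eq, AlgHom.commutes]
    rcases eq_or_ne a i with rfl | hi
    · simp [dehomogenize_X_left, offPart, hij]
    rcases eq_or_ne a j with rfl | hj
    · simp [dehomogenize_X_right hij, offPart, hi, ← Polynomial.C_mul_X_pow_eq_monomial]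
    · simp [dehomogenize_X_of_ne hi hj, offPart, hi, hj, C_mul_X_pow_eq_monomial]

theorem coeff_coeff_dehomogenize (hij : i ≠ j) (p : MvPolynomial σ R) (r : σ →₀ ℕ) (b : ℕ) :
    (coeff r (dehomogenize R i j p)).coeff b =
      ∑ s ∈ p.support with offPart i j s = r ∧ s j = b, coeff s p := by
  conv_lhs => rw [p.as_sum]
  rw [map_sum, coeff_sum, Polynomial.finsetSum_coeff, Finset.sum_filter]
  refine Finset.sum_congr rfl fun s _ => ?_
  rw [dehomogenize_monomial hij, coeff_monomial]
  by_cases hs : offPart i j s = r <;> simp [hs, Polynomial.coeff_monomial]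

theorem exists_mem_support_of_coeff_coeff_dehomogenize_ne_zero (hij : i ≠ j)
    {p : MvPolynomial σ R} {r : σ →₀ ℕ} {b : ℕ}
    (h : (coeff r (dehomogenize R i j p)).coeff b ≠ 0) :
    ∃ s ∈ p.support, offPart i j s = r ∧ s j = b := by
  rw [coeff_coeff_dehomogenize hij] at h
  obtain ⟨s, hs, -⟩ := Finset.exists_ne_zero_of_sum_ne_zero h
  exact ⟨s, (Finset.mem_filter.1 hs).1, (Finset.mem_filter.1 hs).2⟩

theorem coeff_coeff_dehomogenize_offPart (hij : i ≠ j) {p : MvPolynomial σ R} {e : ℕ}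
    (hp : p.IsHomogeneous e) {s : σ →₀ ℕ} (hs : s ∈ p.support) :
    (coeff (offPart i j s) (dehomogenize R i j p)).coeff (s j) = coeff s p := by
  rw [coeff_coeff_dehomogenize hij]
  refine Finset.sum_eq_single_of_mem s (by simp [mem_support_iff.1 hs]) fun t ht hts => ?_
  obtain ⟨ht, hoff, hj⟩ := Finset.mem_filter.1 ht
  have hdeg : t.degree = s.degree := by
    rw [degree_eq_of_mem_support hp ht, degree_eq_of_mem_support hp hs]
  exact absurd (eq_of_offPart_eq hij hoff hj hdeg) hts

theorem coeff_dehomogenize_X_add_X_pow_mul (hij : i ≠ j) (k : ℕ) (p : MvPolynomial σ R)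
    (r : σ →₀ ℕ) :
    coeff r (dehomogenize R i j ((X i + X j) ^ k * p)) =
      (1 + Polynomial.X) ^ k * coeff r (dehomogenize R i j p) := by
  rw [map_mul, map_pow, map_add, dehomogenize_X_left, dehomogenize_X_right hij, ← C_1, ← C_add,
    ← C_pow, coeff_C_mul]

end Dehomogenize

section AvoidingIdeal

variable {σ : Type*} (R : Type*) [CommSemiring R]

/-- The ideal generated by the monomials of degree `d` that avoid `x_i` or `x_j`. It equals
`P_i ^ d + P_j ^ d`, where `P_a` is generated by all variables except `x_a`. -/
noncomputable def avoidingIdeal (i j : σ) (d : ℕ) : Ideal (MvPolynomial σ R) :=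
  Ideal.span ((fun s => monomial s (1 : R)) '' {s | s.degree = d ∧ (s i = 0 ∨ s j = 0)})

variable {R} {i j : σ} {d : ℕ}

theorem mem_avoidingIdeal_iff {p : MvPolynomial σ R} :
    p ∈ avoidingIdeal R i j d ↔
      ∀ s ∈ p.support, d + s i ≤ s.degree ∨ d + s j ≤ s.degree := by
  rw [avoidingIdeal, mem_ideal_span_monomial_image]
  refine forall₂_congr fun s _ => ?_
  rw [← exists_le_degree_eq_and_apply_eq_zero_iff, ← exists_le_degree_eq_and_apply_eq_zero_iff,
    ← exists_or]
  refine exists_congr fun g => ?_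
  rw [Set.mem_ofPred_eq]
  tauto

theorem monomial_mem_avoidingIdeal {s : σ →₀ ℕ} (c : R)
    (hs : d + s i ≤ s.degree ∨ d + s j ≤ s.degree) :
    monomial s c ∈ avoidingIdeal R i j d :=
  mem_avoidingIdeal_iff.2 fun t ht => by
    rwa [Finset.mem_singleton.1 (support_monomial_subset ht)]

theorem X_mul_X_dvd_monomial_iff [Nontrivial R] (hij : i ≠ j) (s : σ →₀ ℕ) :
    (X i * X j : MvPolynomial σ R) ∣ monomial s 1 ↔ s i ≠ 0 ∧ s j ≠ 0 := by
  rw [X, X, monomial_mul, mul_one, monomial_dvd_monomial, single_add_single_le_iff hij]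
  simp [Nat.one_le_iff_ne_zero]

theorem span_monomial_eq_avoidingIdeal [Nontrivial R] (hij : i ≠ j) {G : Set (σ →₀ ℕ)}
    (hG : ∀ s ∈ G, s.degree = d)
    (hdvd : ∀ s : σ →₀ ℕ, s.degree = d → ((X i * X j : MvPolynomial σ R) ∣ monomial s 1 ↔
      monomial s (1 : R) ∉ Ideal.span ((fun s => monomial s (1 : R)) '' G))) :
    Ideal.span ((fun s => monomial s (1 : R)) '' G) = avoidingIdeal R i j d := by
  have hmem (s : σ →₀ ℕ) (hs : s.degree = d) :
      monomial s (1 : R) ∈ Ideal.span ((fun s => monomial s (1 : R)) '' G) ↔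
        s i = 0 ∨ s j = 0 := by
    rw [← not_iff_not, ← hdvd s hs, X_mul_X_dvd_monomial_iff hij, not_or]
  apply le_antisymm
  · refine Ideal.span_mono (Set.image_mono fun s hs => ⟨hG s hs, ?_⟩)
    exact (hmem s (hG s hs)).1 (Ideal.subset_span ⟨s, hs, rfl⟩)
  · rw [avoidingIdeal, Ideal.span_le]
    rintro _ ⟨s, ⟨hs, havoid⟩, rfl⟩
    exact (hmem s hs).2 havoid

theorem card_support_coeff_dehomogenize_le [DecidableEq σ] (hij : i ≠ j) {m : ℕ} {r : σ →₀ ℕ}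
    (hr : r.degree ≤ d) {p : MvPolynomial σ R} (hp : p.IsHomogeneous m)
    (hpI : p ∈ avoidingIdeal R i j d) :
    (coeff r (dehomogenize R i j p)).support.card ≤ 2 * (m + 1 - d) := by
  have hsub : (coeff r (dehomogenize R i j p)).support ⊆
      Finset.range (m + 1 - d) ∪ Finset.Ico (d - r.degree) (m + 1 - r.degree) := by
    intro b hb
    obtain ⟨s, hs, rfl, rfl⟩ :=
      exists_mem_support_of_coeff_coeff_dehomogenize_ne_zero hij (Polynomial.mem_support_iff.1 hb)
    have hsI := mem_avoidingIdeal_iff.1 hpI s hs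
    have hdeg := degree_eq_of_mem_support hp hs
    have hoff := degree_offPart_add hij s
    rw [Finset.mem_union, Finset.mem_range, Finset.mem_Ico]
    omega
  have hcard := (Finset.card_le_card hsub).trans (Finset.card_union_le _ _)
  rw [Finset.card_range, Nat.card_Ico] at hcard
  omega

theorem eq_zero_of_X_add_X_pow_mul_mem_avoidingIdeal {R : Type*} [CommRing R] [IsDomain R]
    [CharZero R] (hij : i ≠ j) {e k : ℕ} (hk : 2 * e + k + 2 ≤ 2 * d)
    {f : MvPolynomial σ R} (hf : f.IsHomogeneous e)
    (hfI : (X i + X j) ^ k * f ∈ avoidingIdeal R i j d) : f = 0 := by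
  classical
  have hhom : ((X i + X j) ^ k * f).IsHomogeneous (k + e) := by
    simpa using ((isHomogeneous_X_add_X R i j).pow k).mul hf
  by_contra hne
  obtain ⟨s, hs⟩ := support_nonempty.2 hne
  set q := coeff (offPart i j s) (dehomogenize R i j f)
  have hoff : (offPart i j s).degree ≤ d := by
    have := degree_offPart_add hij s
    have := degree_eq_of_mem_support hf hs
    omega
  have hcard := card_support_coeff_dehomogenize_le hij hoff hhom hfI
  rw [coeff_dehomogenize_X_add_X_pow_mul hij] at hcard
  have hlin : Polynomial.X - Polynomial.C (-1 : R) = 1 + Polynomial.X := by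
    simp [add_comm]
  have hprod : (1 + Polynomial.X) ^ k * q = 0 :=
    eq_zero_of_X_sub_C_pow_dvd_of_card_support_le (neg_ne_zero.2 one_ne_zero)
      (by rw [hlin]; exact dvd_mul_right _ q) (hcard.trans (by omega))
  have hq : q = 0 :=
    (mul_eq_zero.1 hprod).resolve_left (pow_ne_zero k (hlin ▸ Polynomial.X_sub_C_ne_zero _))
  have hcoeff := coeff_coeff_dehomogenize_offPart hij hf hs
  exact mem_support_iff.1 hs (by rw [← hcoeff]; simp [q, hq])

end AvoidingIdeal

section MaximalRank

theorem map_pow_le_of_map_le {R M : Type*} [Semiring R] [AddCommMonoid M] [Module R M]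
    {f : M →ₗ[R] M} {A : ℤ → Submodule R M} (hf : ∀ e, (A e).map f ≤ A (e + 1))
    (e : ℤ) (k : ℕ) : (A e).map (f ^ k) ≤ A (e + k) := by
  induction k with
  | zero => simp [Module.End.one_eq_id]
  | succ k ih =>
    rw [pow_succ', Module.End.mul_eq_comp, Submodule.map_comp, Nat.cast_succ, ← add_assoc]
    exact (Submodule.map_mono ih).trans (hf _)

variable {K M : Type*} [Field K] [AddCommGroup M] [Module K M]

theorem le_map_of_injective_of_le_map {M' : Type*} [AddCommGroup M'] [Module K M']
    {f g : M →ₗ[K] M'} {A : Submodule K M} {B : Submodule K M'}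
    [FiniteDimensional K A] (hf : ∀ x ∈ A, f x = 0 → x = 0) (hfB : A.map f ≤ B)
    (hBg : B ≤ A.map g) : B ≤ A.map f := by
  have hrank : Module.finrank K (A.map f) = Module.finrank K A := by
    rw [← LinearMap.range_domRestrict]
    refine LinearMap.finrank_range_of_inj (LinearMap.ker_eq_bot.1 (LinearMap.ker_eq_bot'.2 ?_))
    exact fun x hx => Subtype.ext (hf x x.2 hx)
  have : FiniteDimensional K B := Submodule.finiteDimensional_of_le hBg
  refine (Submodule.eq_of_le_of_finrank_le hfB ?_).ge
  rw [hrank]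
  exact (Submodule.finrank_mono hBg).trans (Submodule.finrank_map_le g A)

-- If `A e = ⊥` for `e < 0`, then `hsurj` at negative `e` says that `A` vanishes above degree `N`.
theorem maxRankOn_pow_of_symmetric {f : M →ₗ[K] M} {A : ℤ → Submodule K M} (N : ℤ)
    (hf : ∀ e, (A e).map f ≤ A (e + 1))
    (hinj : ∀ (e : ℤ) (k : ℕ), 2 * e + k = N → ∀ x ∈ A e, (f ^ k) x = 0 → x = 0)
    (hsurj : ∀ (e : ℤ) (k : ℕ), 2 * e + k = N → A (e + k) ≤ (A e).map (f ^ k))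
    (e : ℤ) (k : ℕ) : MaxRankOn (f ^ k) (A e) (A (e + k)) := by
  rcases le_total (2 * e + k) N with hle | hge
  · left
    obtain ⟨c, hc⟩ := Int.le.dest hle
    refine fun x hx hx0 => hinj e (c + k) (by push_cast; omega) x hx ?_
    rw [pow_add, Module.End.mul_apply, hx0, map_zero]
  · right
    obtain ⟨c, hc⟩ := Int.le.dest hge
    have hlow : (A (e - c)).map (f ^ c) ≤ A e := by
      simpa using map_pow_le_of_map_le hf (e - c) c
    have honto := hsurj (e - c) (k + c) (by push_cast; omega)
    rw [pow_add, Module.End.mul_eq_comp, Submodule.map_comp] at honto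
    calc A (e + k) = A (e - c + (k + c : ℕ)) := by congr 1; push_cast; ring
      _ ≤ ((A (e - c)).map (f ^ c)).map (f ^ k) := honto
      _ ≤ (A e).map (f ^ k) := Submodule.map_mono hlow

end MaximalRank

section GradedPiece

variable {K : Type*} [Field K] {n : ℕ} (I : Ideal (MvPolynomial (Fin n) K))

theorem gradedPiece_of_neg {e : ℤ} (he : e < 0) : gradedPiece I e = ⊥ :=
  if_neg he.not_ge

theorem gradedPiece_natCast (e : ℕ) : gradedPiece I e =
    (homogeneousSubmodule (Fin n) K e).map (Ideal.Quotient.mkₐ K I).toLinearMap :=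
  if_pos e.cast_nonneg

variable {I} in
theorem mem_gradedPiece_natCast {e : ℕ} {x : MvPolynomial (Fin n) K ⧸ I} :
    x ∈ gradedPiece I e ↔
      ∃ p : MvPolynomial (Fin n) K, p.IsHomogeneous e ∧ Ideal.Quotient.mk I p = x := by
  rw [gradedPiece_natCast]
  rfl

theorem gradedPiece_natCast_eq_span (e : ℕ) : gradedPiece I e =
    Submodule.span K ((fun s => Ideal.Quotient.mk I (monomial s (1 : K))) ''
      {s | s.degree = e}) := by
  have hspan : homogeneousSubmodule (Fin n) K e =
      Submodule.span K ((monomial · (1 : K)) '' {s | s.degree = e}) := by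
    rw [homogeneousSubmodule_eq_finsupp_supported]
    exact restrictSupport_eq_span K _
  rw [gradedPiece_natCast, hspan, Submodule.map_span, Set.image_image]
  rfl

instance finiteDimensional_gradedPiece_natCast (e : ℕ) :
    FiniteDimensional K (gradedPiece I e) := by
  rw [gradedPiece_natCast]
  exact Module.Finite.iff_fg.2 ((homogeneousSubmodule_fg (Fin n) K e).map _)

theorem map_mulLeft_gradedPiece_le {p : MvPolynomial (Fin n) K} {m : ℕ} (hp : p.IsHomogeneous m)
    (e : ℤ) : (gradedPiece I e).map (LinearMap.mulLeft K (Ideal.Quotient.mk I p)) ≤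
      gradedPiece I (e + m) := by
  rcases lt_or_ge e 0 with he | he
  · simp [gradedPiece_of_neg I he]
  lift e to ℕ using he
  rintro _ ⟨x, hx, rfl⟩
  obtain ⟨q, hq, rfl⟩ := mem_gradedPiece_natCast.1 hx
  rw [← Nat.cast_add, mem_gradedPiece_natCast]
  exact ⟨p * q, add_comm m e ▸ hp.mul hq, map_mul _ p q⟩

end GradedPiece

section StrongLefschetz

variable {K : Type*} [Field K] {n d : ℕ} {i j : Fin n}

theorem gradedPiece_avoidingIdeal_eq_bot (hij : i ≠ j) {m : ℕ} (hm : 2 * d ≤ m + 1) :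
    gradedPiece (avoidingIdeal K i j d) m = ⊥ := by
  rw [gradedPiece_natCast_eq_span, Submodule.span_eq_bot]
  rintro _ ⟨s, rfl, rfl⟩
  have hoff := degree_offPart_add hij s
  exact Ideal.Quotient.eq_zero_iff_mem.2 (monomial_mem_avoidingIdeal 1 (by omega))

theorem gradedPiece_le_map_mulLeft_X_mul_X_pow (hij : i ≠ j) {e δ : ℕ} (hd : e + δ + 1 = d) :
    gradedPiece (avoidingIdeal K i j d) (e + (2 * δ : ℕ)) ≤
      (gradedPiece (avoidingIdeal K i j d) e).map
        (LinearMap.mulLeft K (Ideal.Quotient.mk _ ((X i * X j) ^ δ))) := by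
  rw [← Nat.cast_add, gradedPiece_natCast_eq_span, Submodule.span_le]
  rintro _ ⟨s, hs, rfl⟩
  rw [Set.mem_ofPred_eq] at hs
  by_cases hsI : d + s i ≤ s.degree ∨ d + s j ≤ s.degree
  · simp only [Ideal.Quotient.eq_zero_iff_mem.2 (monomial_mem_avoidingIdeal (1 : K) hsI)]
    exact zero_mem _
  set u : Fin n →₀ ℕ := Finsupp.single i δ + Finsupp.single j δ with hu
  have hus : u + (s - u) = s :=
    add_tsub_cancel_of_le ((single_add_single_le_iff hij).2 (by omega))
  have hdeg : (s - u).degree = e := by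
    have hsum := congrArg Finsupp.degree hus
    simp only [hu, map_add, Finsupp.degree_single] at hsum ⊢
    omega
  refine ⟨Ideal.Quotient.mk _ (monomial (s - u) 1),
    mem_gradedPiece_natCast.2 ⟨_, isHomogeneous_monomial 1 hdeg, rfl⟩, ?_⟩
  have hmul : (X i * X j) ^ δ * monomial (s - u) (1 : K) = monomial s 1 := by
    rw [mul_pow, X_pow_eq_monomial, X_pow_eq_monomial, monomial_mul, monomial_mul, ← hu, hus,
      mul_one, mul_one]
  rw [LinearMap.mulLeft_apply, ← map_mul, hmul]

variable [CharZero K]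

theorem eq_zero_of_mulLeft_X_add_X_pow_apply_eq_zero (hij : i ≠ j) {e : ℤ} {k : ℕ}
    (hk : 2 * e + k ≤ 2 * d - 2) (x : MvPolynomial (Fin n) K ⧸ avoidingIdeal K i j d)
    (hx : x ∈ gradedPiece (avoidingIdeal K i j d) e)
    (hx0 : (LinearMap.mulLeft K (Ideal.Quotient.mk _ (X i + X j)) ^ k) x = 0) :
    x = 0 := by
  rcases lt_or_ge e 0 with he | he
  · simpa [gradedPiece_of_neg _ he] using hx
  lift e to ℕ using he
  obtain ⟨f, hf, rfl⟩ := mem_gradedPiece_natCast.1 hx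
  rw [LinearMap.pow_mulLeft, LinearMap.mulLeft_apply, ← map_pow, ← map_mul,
    Ideal.Quotient.eq_zero_iff_mem] at hx0
  rw [eq_zero_of_X_add_X_pow_mul_mem_avoidingIdeal hij (by omega) hf hx0, map_zero]

theorem gradedPiece_le_map_mulLeft_X_add_X_pow (hij : i ≠ j) {e : ℤ} {k : ℕ}
    (hk : 2 * e + k = 2 * d - 2) :
    gradedPiece (avoidingIdeal K i j d) (e + k) ≤ (gradedPiece (avoidingIdeal K i j d) e).map
      (LinearMap.mulLeft K (Ideal.Quotient.mk (avoidingIdeal K i j d) (X i + X j)) ^ k) := by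
  rcases lt_or_ge e 0 with he | he
  · obtain hneg | hpos := lt_or_ge (e + k) 0
    · simp [gradedPiece_of_neg _ hneg]
    · obtain ⟨m, hm⟩ := Int.eq_ofNat_of_zero_le hpos
      rw [hm, gradedPiece_avoidingIdeal_eq_bot hij (by omega)]
      exact bot_le
  lift e to ℕ using he
  obtain ⟨δ, rfl⟩ : ∃ δ, k = 2 * δ := ⟨d - 1 - e, by omega⟩
  exact le_map_of_injective_of_le_map
    (eq_zero_of_mulLeft_X_add_X_pow_apply_eq_zero hij hk.le)
    (map_pow_le_of_map_le (map_mulLeft_gradedPiece_le _ (isHomogeneous_X_add_X K i j)) e _)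
    (gradedPiece_le_map_mulLeft_X_mul_X_pow hij (by omega))

end StrongLefschetz

/-- Let `I ⊆ K[x_1,…,x_n]` be an artinian monomial ideal generated in the
single degree `d` (`K` of characteristic zero). If there are `i < j` such that for every
degree-`d` monomial `m`, `x_i x_j ∣ m` if and only if `m ∉ I`, then `S/I` has the strong
Lefschetz property. -/
theorem SLP_for_monomial_ideals_determined_by_xixj_divisibility
    (K : Type*) [Field K] [CharZero K] (n d : ℕ)
    (I : Ideal (MvPolynomial (Fin n) K))
    (hart : Module.Finite K (MvPolynomial (Fin n) K ⧸ I))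
    (hmon : ∃ G : Set (Fin n →₀ ℕ), (∀ s ∈ G, (s.sum fun _ v => v) = d) ∧
      I = Ideal.span ((fun s => monomial s (1 : K)) '' G))
    (i j : Fin n) (hij : i < j)
    (hiff : ∀ s : Fin n →₀ ℕ, (s.sum fun _ v => v) = d →
      ((X i * X j : MvPolynomial (Fin n) K) ∣ monomial s 1 ↔ monomial s (1 : K) ∉ I)) :
    ∃ ℓ : MvPolynomial (Fin n) K, ℓ.IsHomogeneous 1 ∧
      ∀ (jdeg : ℤ) (k : ℕ),
        MaxRankOn (LinearMap.mulLeft K ((Ideal.Quotient.mk I ℓ) ^ k))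
          (gradedPiece I jdeg) (gradedPiece I (jdeg + k)) := by
  obtain ⟨G, hG, rfl⟩ := hmon
  rw [span_monomial_eq_avoidingIdeal hij.ne hG hiff]
  have hℓ : (X i + X j : MvPolynomial (Fin n) K).IsHomogeneous 1 := isHomogeneous_X_add_X K i j
  refine ⟨X i + X j, hℓ, fun e k => ?_⟩
  rw [← LinearMap.pow_mulLeft]
  exact maxRankOn_pow_of_symmetric (2 * d - 2) (map_mulLeft_gradedPiece_le _ hℓ)
    (fun _ _ hk => eq_zero_of_mulLeft_X_add_X_pow_apply_eq_zero hij.ne hk.le)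
    (fun _ _ hk => gradedPiece_le_map_mulLeft_X_add_X_pow hij.ne hk) e k
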